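/- arXiv:1108.3680 — 2 statements merged into one kernel-verified Lean document; each statement's English description precedes it below -/
import Mathlib

section
/- Let K = {1, 2, ..., k} and let P(y) denote the largest primorial not exceeding y. Then the singular series S({0} ∪ P((log x)^{1/2}) · K) is ≫ (log log log x)^k as x → ∞, where P(y)·K = {P(y), 2P(y), ..., kP(y)}. -/
open Finset

/-- Number of residue classes mod `p` occupied by the elements of `D`. -/
def nu (D : Finset ℕ) (p : ℕ) : ℕ := (D.image (· % p)).card

/-- The Hardy–Littlewood singular series of a finite set `D`. -/
noncomputable def singSeries (D : Finset ℕ) : ℝ :=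
  ∏' p : Nat.Primes, ((1 - 1 / ((p : ℕ) : ℝ)) ^ D.card)⁻¹ * (1 - (nu D (p : ℕ) : ℝ) / ((p : ℕ) : ℝ))

/-- `primePi x D` counts positive integers `m ≤ x` with `m + d` prime for all `d ∈ D`. -/
noncomputable def primePi (x : ℝ) (D : Finset ℕ) : ℕ :=
  {m : ℕ | 0 < m ∧ (m : ℝ) ≤ x ∧ ∀ d ∈ D, Nat.Prime (m + d)}.ncard

/-- `Ncham x D` counts `n` such that `p_{n+k} ≤ x` and the gaps `p_{n+i} - p_n` for
`i = 1, …, k` are exactly the elements of `D` (with `k = D.card`). -/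
noncomputable def Ncham (x : ℝ) (D : Finset ℕ) : ℕ :=
  {n : ℕ | ((Nat.nth Nat.Prime (n + D.card) : ℝ) ≤ x) ∧
    (Finset.range D.card).image
      (fun i => Nat.nth Nat.Prime (n + i + 1) - Nat.nth Nat.Prime n) = D}.ncard

/-- `D` is a `k`-tuple jumping champion for `x`. -/
def IsChampion (k : ℕ) (x : ℝ) (D : Finset ℕ) : Prop :=
  D.card = k ∧ (∀ d ∈ D, 0 < d) ∧
    ∀ D' : Finset ℕ, D'.card = k → (∀ d ∈ D', 0 < d) → Ncham x D' ≤ Ncham x D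

/-- Number of prime factors counted with multiplicity. -/
def bigOmega (n : ℕ) : ℕ := n.primeFactorsList.length

/-- The `n`-th primorial `2·3·5⋯p_n`. -/
noncomputable def primorial' (n : ℕ) : ℕ := ∏ i ∈ Finset.range n, Nat.nth Nat.Prime i

/-- The largest primorial not exceeding `y` (equal to `1` if `y < 1`). -/
noncomputable def largestPrimorial (y : ℝ) : ℕ :=
  primorial' (sSup {n : ℕ | (primorial' n : ℝ) ≤ y})

lemma aux_prod_ge {ι : Type*} (T : Finset ι) (f g : ι → ℝ)
    (h0 : ∀ i ∈ T, 0 ≤ g i) (h1 : ∀ i ∈ T, g i ≤ 1) (hf : ∀ i ∈ T, 1 - g i ≤ f i) :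
    1 - ∑ i ∈ T, g i ≤ ∏ i ∈ T, f i := by
  classical
  have key : 1 - ∑ i ∈ T, g i ≤ ∏ i ∈ T, (1 - g i) ∧ ∏ i ∈ T, (1 - g i) ≤ 1 := by
    clear hf
    induction T using Finset.induction_on with
    | empty => simp
    | insert a s ha ih =>
      have := ih (fun i hi => h0 i (Finset.mem_insert_of_mem hi))
        (fun i hi => h1 i (Finset.mem_insert_of_mem hi))
      have a0 := h0 a (Finset.mem_insert_self _ _)
      have a1 := h1 a (Finset.mem_insert_self _ _)
      rw [Finset.sum_insert ha, Finset.prod_insert ha]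
      have hnn : 0 ≤ ∏ i ∈ s, (1 - g i) := Finset.prod_nonneg
        (fun i hi => sub_nonneg.2 (h1 i (Finset.mem_insert_of_mem hi)))
      constructor <;> nlinarith
  refine key.1.trans (Finset.prod_le_prod (fun i hi => sub_nonneg.2 (h1 i hi)) hf)

lemma aux_factor (m p : ℕ) (hm : 1 ≤ m) (hp : m < p) :
    1 - (m : ℝ) ^ 2 / (p : ℝ) ^ 2 ≤
      ((1 - 1 / (p : ℝ)) ^ m)⁻¹ * (1 - (m : ℝ) / (p : ℝ)) ∧
    ((1 - 1 / (p : ℝ)) ^ m)⁻¹ * (1 - (m : ℝ) / (p : ℝ)) ≤ 1 := by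
  have hm' : (1 : ℝ) ≤ m := by exact_mod_cast hm
  have hp' : (m : ℝ) < p := by exact_mod_cast hp
  have hp0 : (0 : ℝ) < p := by linarith
  have e1 : (m : ℝ) / p = m * (1 / p) := by ring
  have e2 : (m : ℝ) ^ 2 / (p : ℝ) ^ 2 = (m * (1 / p)) ^ 2 := by ring
  have ht : (m : ℝ) * (1 / p) < 1 := by
    rw [← e1]; exact (div_lt_one hp0).2 hp'
  rw [e1, e2]
  have ht0 : (0 : ℝ) < 1 / p := by positivity
  generalize (1 : ℝ) / p = t at *
  have ht1 : t < 1 := by nlinarith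
  have hpos : 0 < (1 - t) ^ m := pow_pos (by linarith) m
  have b1 : 1 + m * t ≤ (1 + t) ^ m := one_add_mul_le_pow (by linarith) m
  have b2 : 1 + m * (-t) ≤ (1 + (-t)) ^ m := one_add_mul_le_pow (by linarith) m
  have b3 : (1 + t) ^ m * (1 - t) ^ m ≤ 1 := by
    rw [← mul_pow]
    exact pow_le_one₀ (by nlinarith) (by nlinarith)
  have b4 : (1 + t) ^ m ≤ ((1 - t) ^ m)⁻¹ := by
    rw [← one_div, le_div_iff₀ hpos]; exact b3
  constructor
  · nlinarith
  · rw [inv_mul_le_iff₀ hpos]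
    rw [← sub_eq_add_neg] at b2
    linarith

lemma aux_mertens (z : ℕ) (hz : 1 ≤ z) :
    Real.log z ≤ ∏ p ∈ z.primesBelow, (1 - 1 / (p : ℝ))⁻¹ := by
  let f : ℕ →* ℝ :=
    { toFun := fun n => (n : ℝ)⁻¹
      map_one' := by simp
      map_mul' := by intro a b; push_cast; rw [mul_inv] }
  have hf : ∀ {p : ℕ}, p.Prime → ‖f p‖ < 1 := by
    intro p hp
    have : (1 : ℝ) < p := by exact_mod_cast hp.one_lt
    show ‖(p : ℝ)⁻¹‖ < 1
    rw [Real.norm_of_nonneg (by positivity)]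
    exact inv_lt_one_of_one_lt₀ this
  have hs := (EulerProduct.summable_and_hasSum_smoothNumbers_prod_primesBelow_geometric hf z).2
  have h1 := log_add_one_le_harmonic (z - 1)
  rw [Nat.sub_add_cancel hz] at h1
  refine h1.trans ?_
  have h2 : ∏ p ∈ z.primesBelow, (1 - 1 / (p : ℝ))⁻¹ = ∏ p ∈ z.primesBelow, (1 - f p)⁻¹ := by
    refine Finset.prod_congr rfl fun p _ => ?_
    rw [one_div]; rfl
  rw [h2]
  have hmem : ∀ n ∈ Finset.Icc 1 (z - 1), n ∈ z.smoothNumbers := by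
    intro n hn
    rw [Finset.mem_Icc] at hn
    exact Nat.mem_smoothNumbers_of_lt (by omega) (by omega)
  have h3 := sum_le_hasSum ((Finset.Icc 1 (z - 1)).subtype (· ∈ z.smoothNumbers))
    (fun i _ => by show (0 : ℝ) ≤ ((i : ℕ) : ℝ)⁻¹; positivity) hs
  refine le_trans (le_of_eq ?_) h3
  rw [Finset.sum_subtype_of_mem (fun n => f n) hmem, harmonic_eq_sum_Icc]
  push_cast
  rfl

lemma aux_card (k d : ℕ) (hd : 0 < d) :
    (insert 0 ((Finset.Icc 1 k).image (fun i => i * d))).card = k + 1 := by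
  rw [Finset.card_insert_of_notMem, Finset.card_image_of_injective, Nat.card_Icc]
  · omega
  · intro a b h; exact Nat.eq_of_mul_eq_mul_right hd h
  · intro h
    obtain ⟨i, hi, h⟩ := Finset.mem_image.1 h
    rw [Finset.mem_Icc] at hi
    have : 0 < i * d := Nat.mul_pos (by omega) hd
    omega

lemma aux_nu_dvd (k d p : ℕ) (h : p ∣ d) :
    nu (insert 0 ((Finset.Icc 1 k).image (fun i => i * d))) p = 1 := by
  unfold nu
  rw [Finset.card_eq_one]
  refine ⟨0, ?_⟩
  ext a
  simp only [Finset.mem_image, Finset.mem_insert, Finset.mem_singleton]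
  constructor
  · rintro ⟨b, rfl | ⟨i, _, rfl⟩, rfl⟩
    · simp
    · exact Nat.mod_eq_zero_of_dvd (h.mul_left i)
  · rintro rfl
    exact ⟨0, Or.inl rfl, by simp⟩

lemma aux_nu_ndvd (k d p : ℕ) (hp : p.Prime) (h : ¬ p ∣ d) (hkp : k + 1 < p) :
    nu (insert 0 ((Finset.Icc 1 k).image (fun i => i * d))) p = k + 1 := by
  have hd : 0 < d := Nat.pos_of_ne_zero (by rintro rfl; simp at h)
  unfold nu
  have e : insert 0 ((Finset.Icc 1 k).image (fun i => i * d))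
      = (Finset.range (k + 1)).image (fun i => i * d) := by
    ext a
    simp only [Finset.mem_image, Finset.mem_insert, Finset.mem_Icc, Finset.mem_range]
    constructor
    · rintro (rfl | ⟨i, hi, rfl⟩)
      · exact ⟨0, by omega, by simp⟩
      · exact ⟨i, by omega, rfl⟩
    · rintro ⟨i, hi, rfl⟩
      rcases Nat.eq_zero_or_pos i with rfl | h0
      · left; simp
      · right; exact ⟨i, by omega, rfl⟩
  rw [e, Finset.image_image, Finset.card_image_of_injOn, Finset.card_range]
  intro a ha b hb hab
  simp only [Finset.coe_range, Set.mem_Iio] at ha hb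
  have hab' : a * d ≡ b * d [MOD p] := hab
  have := Nat.ModEq.cancel_right_of_coprime ((Nat.Prime.coprime_iff_not_dvd hp).2 h) hab'
  exact Nat.ModEq.eq_of_lt_of_lt this (by omega) (by omega)

lemma aux_main (k : ℕ) : ∃ Z : ℕ, ∀ d z : ℕ, 0 < d → Z ≤ z →
    (∀ p : ℕ, p.Prime → (p ∣ d ↔ p < z)) →
    (1 / 2) * (Real.log z) ^ k ≤
      singSeries (insert 0 ((Finset.Icc 1 k).image (fun i => i * d))) := by
  classical
  set m := k + 1 with hm
  have hsum : Summable (fun p : Nat.Primes => (m : ℝ) ^ 2 / ((p : ℕ) : ℝ) ^ 2) := by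
    have h : Summable (fun n : ℕ => (m : ℝ) ^ 2 / (n : ℝ) ^ 2) := by
      have := (Real.summable_one_div_nat_pow (p := 2)).2 (by norm_num)
      simpa [div_eq_mul_inv] using this.mul_left ((m : ℝ) ^ 2)
    exact h.comp_injective (i := fun p : Nat.Primes => (p : ℕ)) Subtype.coe_injective
  obtain ⟨s, hs⟩ := summable_iff_vanishing_norm.1 hsum (1 / 2) (by norm_num)
  refine ⟨m + 1 + s.sup (fun p => (p : ℕ) + 1), fun d z hd hZ hdz => ?_⟩
  set D := insert 0 ((Finset.Icc 1 k).image (fun i => i * d)) with hD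
  have hcard : D.card = m := aux_card k d hd
  let F : Nat.Primes → ℝ := fun p =>
    ((1 - 1 / ((p : ℕ) : ℝ)) ^ D.card)⁻¹ * (1 - (nu D (p : ℕ) : ℝ) / ((p : ℕ) : ℝ))
  have hsz : ∀ p ∈ s, (p : ℕ) < z := by
    intro p hp
    have : (p : ℕ) + 1 ≤ s.sup (fun p => (p : ℕ) + 1) :=
      Finset.le_sup (f := fun p : Nat.Primes => (p : ℕ) + 1) hp
    omega
  have hFsmall : ∀ p : Nat.Primes, (p : ℕ) < z → F p = ((1 - 1 / ((p : ℕ) : ℝ))⁻¹) ^ k := by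
    intro p hp
    have hn : nu D p = 1 := aux_nu_dvd k d p ((hdz p p.2).2 hp)
    have h1 : (1 : ℝ) < ((p : ℕ) : ℝ) := by exact_mod_cast p.2.one_lt
    have h2 : (1 : ℝ) - 1 / ((p : ℕ) : ℝ) ≠ 0 := by
      have : 1 / ((p : ℕ) : ℝ) < 1 := (div_lt_one (by linarith)).2 h1
      linarith
    show ((1 - 1 / ((p : ℕ) : ℝ)) ^ D.card)⁻¹ * (1 - (nu D (p : ℕ) : ℝ) / ((p : ℕ) : ℝ)) = _
    rw [hn, hcard, hm, Nat.cast_one, pow_succ, mul_inv, mul_assoc, inv_mul_cancel₀ h2, mul_one,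
      inv_pow]
  have hFbig : ∀ p : Nat.Primes, z ≤ (p : ℕ) →
      1 - (m : ℝ) ^ 2 / ((p : ℕ) : ℝ) ^ 2 ≤ F p ∧ F p ≤ 1 := by
    intro p hp
    have hn : nu D p = m := aux_nu_ndvd k d p p.2
      (fun h => by have := (hdz p p.2).1 h; omega) (by omega)
    show _ ≤ ((1 - 1 / ((p : ℕ) : ℝ)) ^ D.card)⁻¹ * (1 - (nu D (p : ℕ) : ℝ) / ((p : ℕ) : ℝ)) ∧
      ((1 - 1 / ((p : ℕ) : ℝ)) ^ D.card)⁻¹ * (1 - (nu D (p : ℕ) : ℝ) / ((p : ℕ) : ℝ)) ≤ _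
    rw [hn, hcard]
    exact aux_factor m p (by omega) (by omega)
  -- the finite set of small primes
  let S : Finset Nat.Primes := z.primesBelow.subtype Nat.Prime
  have hS : ∀ p : Nat.Primes, p ∈ S ↔ (p : ℕ) < z := by
    intro p
    exact Finset.mem_subtype.trans (Nat.mem_primesBelow.trans
      ⟨fun h => h.1, fun h => ⟨h, p.2⟩⟩)
  have hmult : Multipliable F := by
    have h : Summable (fun p => ‖F p - 1‖) := by
      refine Summable.of_norm_bounded_eventually hsum ?_
      have : ((S : Set Nat.Primes)ᶜ) ∈ Filter.cofinite := S.finite_toSet.compl_mem_cofinite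
      filter_upwards [this] with p hp
      have hp' : z ≤ (p : ℕ) := by
        by_contra hlt
        exact hp (Finset.mem_coe.2 ((hS p).2 (by omega)))
      have := hFbig p hp'
      rw [norm_norm, Real.norm_eq_abs, abs_le]
      have h0 : (0 : ℝ) ≤ (m : ℝ) ^ 2 / ((p : ℕ) : ℝ) ^ 2 := by positivity
      constructor <;> linarith
    simpa using multipliable_one_add_of_summable h
  have hz1 : 1 ≤ z := by omega
  have hlog0 : 0 ≤ Real.log z := Real.log_natCast_nonneg z
  have hprodS : (Real.log z) ^ k ≤ ∏ p ∈ S, F p := by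
    rw [Finset.prod_congr rfl (fun p hp => hFsmall p ((hS p).1 hp)), Finset.prod_pow]
    refine pow_le_pow_left₀ hlog0 ?_ k
    refine (aux_mertens z hz1).trans (le_of_eq ?_)
    exact (Finset.prod_subtype_of_mem (fun p : ℕ => (1 - 1 / (p : ℝ))⁻¹)
      (fun p hp => Nat.prime_of_mem_primesBelow hp)).symm
  show _ ≤ ∏' p, F p
  refine ge_of_tendsto hmult.hasProd ?_
  filter_upwards [Filter.eventually_ge_atTop S] with T hT
  rw [← Finset.prod_sdiff hT, mul_comm (1 / 2 : ℝ), mul_comm (∏ p ∈ T \ S, F p)]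
  have hbig : ∀ p ∈ T \ S, z ≤ (p : ℕ) := by
    intro p hp
    have := (Finset.mem_sdiff.1 hp).2
    rw [hS] at this
    omega
  have hhalf : (1 / 2 : ℝ) ≤ ∏ p ∈ T \ S, F p := by
    have h1 := aux_prod_ge (T \ S) F (fun p : Nat.Primes => (m : ℝ) ^ 2 / ((p : ℕ) : ℝ) ^ 2)
      (fun p _ => by positivity)
      (fun p hp => by
        have h1 := hbig p hp
        have h2 : m ≤ (p : ℕ) := by omega
        have h3 : (m : ℝ) ≤ ((p : ℕ) : ℝ) := by exact_mod_cast h2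
        exact div_le_one_of_le₀ (pow_le_pow_left₀ (by positivity) h3 2) (by positivity))
      (fun p hp => (hFbig p (hbig p hp)).1)
    have h2 := hs (T \ S) (by
      rw [Finset.disjoint_left]
      intro p hp hps
      have := hbig p hp
      have := hsz p hps
      omega)
    have h3 := (abs_lt.1 (by rwa [Real.norm_eq_abs] at h2)).2
    linarith
  exact mul_le_mul hprodS hhalf (by norm_num) ((pow_nonneg hlog0 k).trans hprodS)

lemma aux_nth_lt (p N : ℕ) (hp : p.Prime) :
    p ∣ primorial' N ↔ p < Nat.nth Nat.Prime N := by
  unfold primorial'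
  rw [Prime.dvd_finsetProd_iff hp.prime]
  constructor
  · rintro ⟨i, hi, h⟩
    rw [(Nat.prime_dvd_prime_iff_eq hp (Nat.prime_nth_prime i)).1 h]
    exact Nat.nth_strictMono Nat.infinite_setOfPred_prime (Finset.mem_range.1 hi)
  · intro h
    have e : Nat.nth Nat.Prime (Nat.count Nat.Prime p) = p := Nat.nth_count hp
    refine ⟨Nat.count Nat.Prime p, ?_, by rw [e]⟩
    rw [Finset.mem_range]
    rw [← e] at h
    exact (Nat.nth_strictMono Nat.infinite_setOfPred_prime).lt_iff_lt.1 h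

lemma aux_primorial_le (N : ℕ) : primorial' (N + 1) ≤ 4 ^ (Nat.nth Nat.Prime N) := by
  refine le_trans ?_ (primorial_le_four_pow _)
  unfold primorial' primorial
  have hinj : Function.Injective (Nat.nth Nat.Prime) :=
    (Nat.nth_strictMono Nat.infinite_setOfPred_prime).injective
  rw [← Finset.prod_image (f := fun p => p) (g := Nat.nth Nat.Prime) (fun a _ b _ h => hinj h)]
  refine Finset.prod_le_prod_of_subset_of_one_le' ?_ ?_
  · intro p hp
    obtain ⟨i, hi, rfl⟩ := Finset.mem_image.1 hp
    rw [Finset.mem_filter, Finset.mem_range]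
    refine ⟨?_, Nat.prime_nth_prime i⟩
    have : Nat.nth Nat.Prime i ≤ Nat.nth Nat.Prime N :=
      (Nat.nth_strictMono Nat.infinite_setOfPred_prime).monotone
      (show i ≤ N by have := Finset.mem_range.1 hi; omega)
    omega
  · intro p hp _
    exact (Finset.mem_filter.1 hp).2.one_lt.le

lemma aux_two_pow (n : ℕ) : 2 ^ n ≤ primorial' n := by
  unfold primorial'
  calc 2 ^ n = ∏ i ∈ Finset.range n, 2 := by simp
    _ ≤ _ := Finset.prod_le_prod' fun i _ => (Nat.prime_nth_prime i).two_le

lemma aux_largest (y : ℝ) (hy : 1 ≤ y) : ∃ z : ℕ, 0 < largestPrimorial y ∧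
    (∀ p : ℕ, p.Prime → (p ∣ largestPrimorial y ↔ p < z)) ∧ y ≤ (4 : ℝ) ^ z := by
  set A := {n : ℕ | (primorial' n : ℝ) ≤ y} with hA
  refine ⟨Nat.nth Nat.Prime (sSup A), ?_, fun p hp => aux_nth_lt p _ hp, ?_⟩
  · exact lt_of_lt_of_le (by positivity) (aux_two_pow _)
  · have hb : BddAbove A := by
      refine ⟨⌊y⌋₊, fun n hn => Nat.le_floor ?_⟩
      have h1 : n < 2 ^ n := Nat.lt_two_pow_self
      have h2 := h1.le.trans (aux_two_pow n)
      have h3 : (n : ℝ) ≤ primorial' n := by exact_mod_cast h2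
      exact h3.trans hn
    have hn : sSup A + 1 ∉ A := fun h => by
      have := le_csSup hb h
      omega
    have h1 : y < primorial' (sSup A + 1) := not_le.1 hn
    refine h1.le.trans ?_
    exact_mod_cast aux_primorial_le (sSup A)

/-- `S({0} ∪ P(√(log x))·K) ≫ (log log log x)^k`. -/
theorem stmt11 (k : ℕ) (hk : 1 ≤ k) :
    ∃ c : ℝ, 0 < c ∧ ∃ X : ℝ, ∀ x : ℝ, X ≤ x →
      c * (Real.log (Real.log (Real.log x))) ^ k ≤
        singSeries (insert 0 ((Finset.Icc 1 k).image
          (fun i => i * largestPrimorial (Real.sqrt (Real.log x))))) := by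
  obtain ⟨Z, hZ⟩ := aux_main k
  refine ⟨1 / 2 * (1 / 2) ^ k, by positivity, Real.exp (Real.exp (9 + 3 * Z)), fun x hx => ?_⟩
  have hL : 9 + 3 * (Z : ℝ) ≤ Real.log (Real.log x) := by
    have h1 : Real.exp (9 + 3 * Z) ≤ Real.log x :=
      (Real.le_log_iff_exp_le ((Real.exp_pos _).trans_le hx)).2 hx
    exact (Real.le_log_iff_exp_le ((Real.exp_pos _).trans_le h1)).2 h1
  have hlx : 1 ≤ Real.log x := by
    have h1 : Real.exp (9 + 3 * Z) ≤ Real.log x :=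
      (Real.le_log_iff_exp_le ((Real.exp_pos _).trans_le hx)).2 hx
    exact (Real.one_le_exp (by positivity)).trans h1
  have hZ0 : (0 : ℝ) ≤ Z := by positivity
  obtain ⟨z, hd, hdz, hyz⟩ := aux_largest (Real.sqrt (Real.log x)) (Real.one_le_sqrt.2 hlx)
  have hz : Real.log (Real.log x) / 3 ≤ z := by
    have h1 := Real.log_le_log (Real.sqrt_pos.2 (by linarith)) hyz
    rw [Real.log_sqrt (by linarith), Real.log_pow] at h1
    have h4 : Real.log 4 = 2 * Real.log 2 := by
      rw [show (4 : ℝ) = 2 ^ 2 by norm_num, Real.log_pow]; norm_num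
    have h2 := Real.log_two_lt_d9
    have h3 : (0 : ℝ) ≤ z := by positivity
    rw [h4] at h1
    nlinarith
  have hZz : Z ≤ z := by
    have : (Z : ℝ) ≤ z := by linarith
    exact_mod_cast this
  refine le_trans ?_ (hZ _ z hd hZz hdz)
  generalize Real.log (Real.log x) = L at *
  have hlogL : 0 ≤ Real.log L := Real.log_nonneg (by linarith)
  have hfin : 1 / 2 * Real.log L ≤ Real.log z := by
    have h1 := Real.log_le_log (by linarith) hz
    rw [Real.log_div (by linarith) (by norm_num)] at h1
    have h2 : Real.log 9 ≤ Real.log L := Real.log_le_log (by norm_num) (by linarith)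
    rw [show (9 : ℝ) = 3 ^ 2 by norm_num, Real.log_pow] at h2
    push_cast at h2
    linarith
  rw [mul_assoc, ← mul_pow]
  exact mul_le_mul_of_nonneg_left (pow_le_pow_left₀ (by positivity) hfin k) (by norm_num)
end

section
/- Let D_k ⊂ [0,h] be a set of k distinct integers with S(D_k) ≠ 0, and let 1 ≤ H ≤ h. Then ∑_{1 ≤ d_0 ≤ H, d_0 ∉ D_k} S(D_k ∪ {d_0}) = S(D_k) · H · (1 + O_k(h^ε / H^{1/2})), where the implied constant depends only on k and ε. -/
open Finset

/-- The factor of the singular series at `p`. -/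
noncomputable def sf (D : Finset ℕ) (p : ℕ) : ℝ :=
  ((1 - 1 / (p : ℝ)) ^ D.card)⁻¹ * (1 - (nu D p : ℝ) / (p : ℝ))

/-- The local coefficient `a(p, ν)`. -/
noncomputable def aa (D : Finset ℕ) (p d : ℕ) : ℝ :=
  if d % p ∈ D.image (· % p) then 1 / ((p : ℝ) - 1)
  else -(nu D p : ℝ) / (((p : ℝ) - 1) * ((p : ℝ) - nu D p))

/-- The weight `p^{-3/2}`. -/
noncomputable def ww (p : ℕ) : ℝ := 1 / ((p : ℝ) * Real.sqrt p)

theorem ww_nonneg (p : ℕ) : 0 ≤ ww p := by unfold ww; positivity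

theorem summable_ww : Summable (fun p : Nat.Primes => ww (p : ℕ)) := by
  have h : Summable (fun n : ℕ => ww n) := by
    have h1 := (Real.summable_one_div_nat_rpow (p := 3 / 2)).2 (by norm_num)
    refine h1.congr fun n => ?_
    unfold ww
    congr 1
    rcases Nat.eq_zero_or_pos n with rfl | hn
    · norm_num
    · have : (0 : ℝ) < n := by exact_mod_cast hn
      rw [Real.sqrt_eq_rpow, show (3 / 2 : ℝ) = 1 + 1 / 2 by norm_num, Real.rpow_add this,
        Real.rpow_one]
  exact h.comp_injective Nat.Primes.coe_nat_injective

theorem prod_one_add_ww_le (c : ℝ) (hc : 0 ≤ c) (T : Finset Nat.Primes) :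
    ∏ p ∈ T, (1 + c * ww (p : ℕ)) ≤ Real.exp (c * ∑' p : Nat.Primes, ww (p : ℕ)) := by
  calc ∏ p ∈ T, (1 + c * ww (p : ℕ)) ≤ ∏ p ∈ T, Real.exp (c * ww (p : ℕ)) := by
        apply Finset.prod_le_prod
        · intro p _
          have := ww_nonneg (p : ℕ)
          positivity
        · intro p _
          have := Real.add_one_le_exp (c * ww (p : ℕ))
          linarith
    _ = Real.exp (c * ∑ p ∈ T, ww (p : ℕ)) := by
        rw [← Real.exp_sum, Finset.mul_sum]
    _ ≤ _ := by
        apply Real.exp_le_exp.2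
        exact mul_le_mul_of_nonneg_left
          (summable_ww.sum_le_tsum T (fun p _ => ww_nonneg _)) hc

theorem nu_le_card (D : Finset ℕ) (p : ℕ) : nu D p ≤ D.card := Finset.card_image_le

theorem nu_insert (D : Finset ℕ) (p d : ℕ) :
    nu (insert d D) p = if d % p ∈ D.image (· % p) then nu D p else nu D p + 1 := by
  unfold nu
  rw [Finset.image_insert]
  split_ifs with h
  · rw [Finset.insert_eq_of_mem h]
  · rw [Finset.card_insert_of_notMem h]

theorem sf_insert (D : Finset ℕ) (p d : ℕ) (hp : p.Prime) (hd : d ∉ D) (hν : nu D p < p) :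
    sf (insert d D) p = sf D p * (1 + aa D p d) := by
  have hp2 : (2 : ℝ) ≤ p := by exact_mod_cast hp.two_le
  have hν' : (nu D p : ℝ) < p := by exact_mod_cast hν
  unfold sf aa
  rw [nu_insert, Finset.card_insert_of_notMem hd, pow_succ, mul_inv]
  have e1 : (1 - 1 / (p : ℝ))⁻¹ = p / (p - 1) := by
    have : (p : ℝ) - 1 ≠ 0 := by linarith
    have : (p : ℝ) ≠ 0 := by linarith
    field_simp
  rw [e1]
  have h1 : (p : ℝ) - 1 ≠ 0 := by linarith
  have h2 : (p : ℝ) ≠ 0 := by linarith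
  have h3 : (p : ℝ) - nu D p ≠ 0 := by linarith
  rw [mul_assoc, mul_assoc]
  congr 1
  split_ifs with h
  · field_simp
    ring
  · push_cast
    field_simp
    ring

theorem aa_mod (D : Finset ℕ) (p d : ℕ) : aa D p (d % p) = aa D p d := by
  unfold aa; rw [Nat.mod_mod]

theorem sum_ite_image (D : Finset ℕ) (p : ℕ) (hp : 0 < p) (x y : ℝ) :
    ∑ r ∈ Finset.range p, (if r % p ∈ D.image (· % p) then x else y) =
      nu D p * x + ((p : ℝ) - nu D p) * y := by
  have h0 : ∑ r ∈ Finset.range p, (if r % p ∈ D.image (· % p) then x else y) =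
      ∑ r ∈ Finset.range p, ((if r ∈ D.image (· % p) then x - y else 0) + y) := by
    apply Finset.sum_congr rfl
    intro r hr
    rw [Nat.mod_eq_of_lt (Finset.mem_range.1 hr)]
    split_ifs <;> ring
  have hsub : D.image (· % p) ⊆ Finset.range p := by
    intro r hr
    obtain ⟨d, _, rfl⟩ := Finset.mem_image.1 hr
    exact Finset.mem_range.2 (Nat.mod_lt _ hp)
  rw [h0, Finset.sum_add_distrib, Finset.sum_ite_mem, Finset.inter_eq_right.2 hsub]
  simp only [Finset.sum_const, nsmul_eq_mul, Finset.card_range]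
  unfold nu
  ring

theorem sum_aa (D : Finset ℕ) (p : ℕ) (hp : p.Prime) (hν : nu D p < p) :
    ∑ r ∈ Finset.range p, aa D p r = 0 := by
  have hp2 : (2 : ℝ) ≤ p := by exact_mod_cast hp.two_le
  have hν' : (nu D p : ℝ) < p := by exact_mod_cast hν
  have h1 : (p : ℝ) - 1 ≠ 0 := by linarith
  have h3 : (p : ℝ) - nu D p ≠ 0 := by linarith
  unfold aa
  rw [sum_ite_image D p hp.pos]
  field_simp
  ring

theorem abs_aa (D : Finset ℕ) (p d : ℕ) (hp : p.Prime) (hν : nu D p < p) :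
    |aa D p d| = if d % p ∈ D.image (· % p) then 1 / ((p : ℝ) - 1)
      else (nu D p : ℝ) / (((p : ℝ) - 1) * ((p : ℝ) - nu D p)) := by
  have hp2 : (2 : ℝ) ≤ p := by exact_mod_cast hp.two_le
  have hν' : (nu D p : ℝ) < p := by exact_mod_cast hν
  have h1 : 0 < (p : ℝ) - 1 := by linarith
  have h3 : 0 < (p : ℝ) - nu D p := by linarith
  unfold aa
  split_ifs
  · rw [abs_of_nonneg]; positivity
  · rw [neg_div, abs_neg, abs_of_nonneg]; positivity

theorem sum_abs_aa (D : Finset ℕ) (p : ℕ) (hp : p.Prime) (hν : nu D p < p) :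
    ∑ r ∈ Finset.range p, |aa D p r| = 2 * nu D p / ((p : ℝ) - 1) := by
  have hp2 : (2 : ℝ) ≤ p := by exact_mod_cast hp.two_le
  have hν' : (nu D p : ℝ) < p := by exact_mod_cast hν
  have h1 : (p : ℝ) - 1 ≠ 0 := by linarith
  have h3 : (p : ℝ) - nu D p ≠ 0 := by linarith
  simp only [abs_aa D p _ hp hν]
  rw [sum_ite_image D p hp.pos]
  field_simp
  ring

theorem sum_range_mul (m n : ℕ) (hm : 0 < m) (hn : 0 < n) (hmn : m.Coprime n) (f g : ℕ → ℝ)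
    (hf : ∀ x, f (x % m) = f x) (hg : ∀ x, g (x % n) = g x) :
    ∑ x ∈ Finset.range (m * n), f x * g x =
      (∑ x ∈ Finset.range m, f x) * ∑ x ∈ Finset.range n, g x := by
  have hinj : Set.InjOn (fun x : ℕ => (x % m, x % n)) (Finset.range (m * n) : Set ℕ) := by
    intro x hx y hy hxy
    have hx' := Finset.mem_range.1 (Finset.mem_coe.1 hx)
    have hy' := Finset.mem_range.1 (Finset.mem_coe.1 hy)
    have h := Prod.mk.inj hxy
    have h2 := (Nat.modEq_and_modEq_iff_modEq_mul hmn).1 ⟨h.1, h.2⟩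
    exact Nat.ModEq.eq_of_lt_of_lt h2 hx' hy'
  have him : (Finset.range (m * n)).image (fun x : ℕ => (x % m, x % n)) =
      Finset.range m ×ˢ Finset.range n := by
    apply Finset.eq_of_subset_of_card_le
    · intro z hz
      obtain ⟨x, _, rfl⟩ := Finset.mem_image.1 hz
      simp [Nat.mod_lt _ hm, Nat.mod_lt _ hn]
    · rw [Finset.card_image_of_injOn hinj]; simp
  rw [Finset.sum_mul_sum, ← Finset.sum_product', ← him, Finset.sum_image hinj]
  apply Finset.sum_congr rfl
  intro x _
  rw [hf, hg]

theorem sum_range_prod (s : Finset Nat.Primes) (f : Nat.Primes → ℕ → ℝ)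
    (hf : ∀ p x, f p (x % (p : ℕ)) = f p x) :
    ∑ x ∈ Finset.range (∏ p ∈ s, (p : ℕ)), ∏ p ∈ s, f p x =
      ∏ p ∈ s, ∑ x ∈ Finset.range (p : ℕ), f p x := by
  classical
  induction s using Finset.induction_on with
  | empty => simp
  | insert p s hp ih =>
    rw [Finset.prod_insert hp, Finset.prod_insert hp, ← ih]
    simp only [Finset.prod_insert hp]
    apply sum_range_mul _ _ p.2.pos (Finset.prod_pos fun q _ => q.2.pos) _ _ _ (hf p)
    · intro x
      apply Finset.prod_congr rfl
      intro q hq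
      rw [← hf q, Nat.mod_mod_of_dvd _ (Finset.dvd_prod_of_mem _ hq), hf]
    · apply Nat.Coprime.prod_right
      intro q hq
      apply (Nat.coprime_primes p.2 q.2).2
      intro h
      exact hp (Nat.Primes.coe_nat_injective h ▸ hq)

theorem abs_sum_range_le (q : ℕ) (hq : 0 < q) (f : ℕ → ℝ) (hf : ∀ x, f (q + x) = f x)
    (h0 : ∑ x ∈ Finset.range q, f x = 0) (N : ℕ) :
    |∑ x ∈ Finset.range N, f x| ≤ ∑ x ∈ Finset.range q, |f x| := by
  induction N using Nat.strong_induction_on with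
  | _ N ih =>
    rcases lt_or_ge N q with h | h
    · refine (Finset.abs_sum_le_sum_abs _ _).trans ?_
      exact Finset.sum_le_sum_of_subset_of_nonneg (Finset.range_subset_range.2 h.le)
        fun _ _ _ => abs_nonneg _
    · obtain ⟨M, rfl⟩ := Nat.exists_eq_add_of_le h
      rw [Finset.sum_range_add, h0, zero_add]
      simp only [hf]
      exact ih M (by omega)

theorem abs_sum_Icc_le (D : Finset ℕ) (hν : ∀ p : Nat.Primes, nu D p < p)
    (s : Finset Nat.Primes) (hs : s.Nonempty) (H : ℕ) :
    |∑ d ∈ Finset.Icc 1 H, ∏ p ∈ s, aa D p d| ≤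
      2 * ∏ p ∈ s, (2 * (nu D p : ℝ) / ((p : ℕ) - 1 : ℝ)) := by
  set q := ∏ p ∈ s, (p : ℕ) with hqd
  have hq : 0 < q := Finset.prod_pos fun q _ => q.2.pos
  set f : ℕ → ℝ := fun d => ∏ p ∈ s, aa D p d with hfd
  have hf : ∀ x, f (q + x) = f x := by
    intro x
    apply Finset.prod_congr rfl
    intro p hp
    rw [← aa_mod, ← aa_mod D p x]
    congr 1
    obtain ⟨c, hc⟩ : (p : ℕ) ∣ q := Finset.dvd_prod_of_mem _ hp
    rw [hc, Nat.mul_add_mod]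
  have h0 : ∑ x ∈ Finset.range q, f x = 0 := by
    rw [hfd, hqd, sum_range_prod s (fun p x => aa D p x) (fun p x => aa_mod D p x)]
    obtain ⟨p, hp⟩ := hs
    exact Finset.prod_eq_zero hp (sum_aa D p p.2 (hν p))
  have h1 : ∑ x ∈ Finset.range q, |f x| =
      ∏ p ∈ s, (2 * (nu D p : ℝ) / ((p : ℕ) - 1 : ℝ)) := by
    rw [hfd, hqd]
    simp only [Finset.abs_prod]
    rw [sum_range_prod s (fun p x => |aa D p x|) (fun p x => by rw [aa_mod])]
    exact Finset.prod_congr rfl fun p _ => sum_abs_aa D p p.2 (hν p)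
  have h2 := abs_sum_range_le q hq f hf h0 (H + 1)
  have h3 := abs_sum_range_le q hq f hf h0 1
  have h4 : ∑ d ∈ Finset.Icc 1 H, f d = ∑ d ∈ Finset.range (H + 1), f d
      - ∑ d ∈ Finset.range 1, f d := by
    rw [Finset.range_eq_Ico, Finset.sum_eq_sum_Ico_succ_bot (by omega)]
    simp
    rfl
  rw [h4, ← h1]
  have := abs_sub (∑ d ∈ Finset.range (H + 1), f d) (∑ d ∈ Finset.range 1, f d)
  linarith

theorem prod_ite_three_le (n : ℕ) (hn : 0 < n) (δ : ℝ) (hδ : 0 < δ) (P : ℕ)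
    (hP : ∀ p : ℕ, P ≤ p → 3 ≤ (p : ℝ) ^ δ) (T : Finset Nat.Primes) :
    ∏ p ∈ T, (if (p : ℕ) ∣ n then (3 : ℝ) else 1) ≤ 3 ^ P * (n : ℝ) ^ δ := by
  classical
  have h1 : ∀ p ∈ T, (if (p : ℕ) ∣ n then (3 : ℝ) else 1) ≤
      (if (p : ℕ) < P then (3 : ℝ) else 1) * (if (p : ℕ) ∣ n then ((p : ℕ) : ℝ) ^ δ else 1) := by
    intro p _
    have hp1 : (1 : ℝ) ≤ ((p : ℕ) : ℝ) ^ δ :=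
      Real.one_le_rpow (by exact_mod_cast p.2.one_lt.le) hδ.le
    split_ifs with ha hb hb
    · linarith
    · have := hP p (not_lt.1 hb); linarith
    · norm_num
    · norm_num
  refine (Finset.prod_le_prod (fun p _ => by split_ifs <;> norm_num) h1).trans ?_
  rw [Finset.prod_mul_distrib]
  have h2 : ∏ p ∈ T, (if (p : ℕ) < P then (3 : ℝ) else 1) ≤ 3 ^ P := by
    rw [Finset.prod_ite]
    simp only [Finset.prod_const, one_pow, mul_one]
    apply pow_le_pow_right₀ (by norm_num)
    calc (T.filter fun p : Nat.Primes => (p : ℕ) < P).card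
        = ((T.filter fun p : Nat.Primes => (p : ℕ) < P).image (fun p : Nat.Primes => (p : ℕ))).card :=
          (Finset.card_image_of_injective _ Nat.Primes.coe_nat_injective).symm
      _ ≤ (Finset.range P).card := by
          apply Finset.card_le_card
          intro x hx
          obtain ⟨p, hp, rfl⟩ := Finset.mem_image.1 hx
          exact Finset.mem_range.2 (Finset.mem_filter.1 hp).2
      _ = P := Finset.card_range P
  have h3 : ∏ p ∈ T, (if (p : ℕ) ∣ n then ((p : ℕ) : ℝ) ^ δ else 1) ≤ (n : ℝ) ^ δ := by
    rw [Finset.prod_ite, Finset.prod_const_one, mul_one,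
      Real.finsetProd_rpow _ _ (fun p _ => Nat.cast_nonneg _)]
    apply Real.rpow_le_rpow (Finset.prod_nonneg fun p _ => Nat.cast_nonneg _) _ hδ.le
    rw [← Nat.cast_prod]
    have : ∏ p ∈ T.filter (fun p : Nat.Primes => (p : ℕ) ∣ n), (p : ℕ) ∣ n := by
      apply Finset.prod_dvd_of_isRelPrime
      · intro p _ q _ hpq
        apply Nat.coprime_iff_isRelPrime.1
        exact (Nat.coprime_primes p.2 q.2).2 fun h => hpq (Nat.Primes.coe_nat_injective h)
      · intro p hp
        exact (Finset.mem_filter.1 hp).2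
    exact_mod_cast Nat.le_of_dvd hn this
  exact mul_le_mul h2 h3
    (Finset.prod_nonneg fun p _ => by split_ifs <;> positivity) (by positivity)

theorem exists_P (δ : ℝ) (hδ : 0 < δ) : ∃ P : ℕ, ∀ p : ℕ, P ≤ p → 3 ≤ (p : ℝ) ^ δ := by
  have := (tendsto_rpow_atTop hδ).comp (tendsto_natCast_atTop_atTop (R := ℝ))
  obtain ⟨P, hP⟩ := Filter.eventually_atTop.1 (this.eventually_ge_atTop 3)
  exact ⟨P, hP⟩

theorem sqrt_mul_abs_aa_le (D : Finset ℕ) (p : Nat.Primes) (d : ℕ) (hν : nu D p < p)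
    (n : ℕ) (hn : ∀ e ∈ D, d % (p : ℕ) = e % (p : ℕ) → (p : ℕ) ∣ n) :
    1 + Real.sqrt (p : ℕ) * |aa D p d| ≤
      (1 + (2 * D.card * (D.card + 1)) * ww p) * (if (p : ℕ) ∣ n then (3 : ℝ) else 1) := by
  have hp2 : (2 : ℝ) ≤ (p : ℕ) := by exact_mod_cast p.2.two_le
  have hν' : (nu D p : ℝ) + 1 ≤ (p : ℕ) := by exact_mod_cast hν
  have hνk : (nu D p : ℝ) ≤ D.card := by exact_mod_cast nu_le_card D p
  have hw := ww_nonneg (p : ℕ)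
  have hk : (0 : ℝ) ≤ D.card := Nat.cast_nonneg _
  have hnu0 : (0 : ℝ) ≤ nu D p := Nat.cast_nonneg _
  have hKw : 0 ≤ (2 * (D.card : ℝ) * (D.card + 1)) * ww p := by positivity
  have hs : 0 < Real.sqrt (p : ℕ) := Real.sqrt_pos.2 (by linarith)
  have hss : Real.sqrt (p : ℕ) * Real.sqrt (p : ℕ) = (p : ℕ) := Real.mul_self_sqrt (by linarith)
  rw [abs_aa D p d p.2 hν]
  split_ifs with h h' h'
  · have hs1 : 1 ≤ Real.sqrt (p : ℕ) := Real.one_le_sqrt.2 (by linarith)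
    have : Real.sqrt (p : ℕ) * (1 / (((p : ℕ) : ℝ) - 1)) ≤ 2 := by
      rw [mul_one_div, div_le_iff₀ (by linarith)]
      nlinarith
    nlinarith
  · exfalso
    obtain ⟨e, he, hed⟩ := Finset.mem_image.1 h
    exact h' (hn e he hed.symm)
  all_goals
    have key : Real.sqrt (p : ℕ) * ((nu D p : ℝ) / ((((p : ℕ) : ℝ) - 1) * ((p : ℕ) - nu D p))) ≤
        (2 * (D.card : ℝ) * (D.card + 1)) * ww p := by
      unfold ww
      rw [mul_one_div, mul_div_assoc', div_le_div_iff₀ (by nlinarith) (by nlinarith)]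
      have e : Real.sqrt (p : ℕ) * (nu D p : ℝ) * (((p : ℕ) : ℝ) * Real.sqrt (p : ℕ)) =
          nu D p * ((p : ℕ) * (p : ℕ)) := by linear_combination ((nu D p : ℝ) * (p : ℕ)) * hss
      rw [e]
      have a1 : ((p : ℕ) : ℝ) ≤ 2 * ((p : ℕ) - 1) := by linarith
      have a2 : ((p : ℕ) : ℝ) ≤ (D.card + 1) * ((p : ℕ) - nu D p) := by nlinarith
      calc (nu D p : ℝ) * ((p : ℕ) * (p : ℕ)) ≤
          D.card * ((2 * ((p : ℕ) - 1)) * ((D.card + 1) * ((p : ℕ) - nu D p))) := by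
            gcongr
            linarith
        _ = _ := by ring
    nlinarith

theorem sq_bound (k : ℕ) (x : ℝ) (hx : 0 ≤ x) (hx1 : x ≤ 1) :
    (1 - x) ^ k ≤ 1 - k * x + k ^ 2 * x ^ 2 := by
  induction k with
  | zero => simp
  | succ k ih =>
    rw [pow_succ]
    have := mul_le_mul_of_nonneg_right ih (show 0 ≤ 1 - x by linarith)
    push_cast
    have hk : (0 : ℝ) ≤ k := Nat.cast_nonneg _
    have : 0 ≤ (k : ℝ) ^ 2 * x ^ 3 := by positivity
    have : 0 ≤ (k : ℝ) * x ^ 2 := by positivity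
    nlinarith [sq_nonneg x]

theorem summable_sf (D : Finset ℕ) : Summable (fun p : Nat.Primes => sf D p - 1) := by
  have hsq : Summable (fun p : Nat.Primes =>
      ((D.card : ℝ) ^ 2 * 2 ^ D.card) * (1 / (((p : ℕ) : ℝ) ^ 2))) := by
    apply Summable.mul_left
    exact (Real.summable_one_div_nat_pow.2 (by norm_num)).comp_injective
      Nat.Primes.coe_nat_injective
  refine Summable.of_norm_bounded_eventually hsq ?_
  have hfin : {p : Nat.Primes | (p : ℕ) ≤ D.sup id}.Finite := by
    apply Set.Finite.of_finite_image (f := fun p : Nat.Primes => (p : ℕ))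
    · exact (Set.finite_Iic (D.sup id)).subset (by rintro _ ⟨p, hp, rfl⟩; exact hp)
    · exact Nat.Primes.coe_nat_injective.injOn
  filter_upwards [hfin.compl_mem_cofinite] with p hp
  have hp' : D.sup id < (p : ℕ) := not_le.1 hp
  have hnu : nu D p = D.card := by
    unfold nu
    apply Finset.card_image_of_injOn
    intro x hx y hy hxy
    have h1 : x < (p : ℕ) := lt_of_le_of_lt (Finset.le_sup (f := id) hx) hp'
    have h2 : y < (p : ℕ) := lt_of_le_of_lt (Finset.le_sup (f := id) hy) hp'
    simpa [Nat.mod_eq_of_lt h1, Nat.mod_eq_of_lt h2] using hxy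
  have hp2 : (2 : ℝ) ≤ (p : ℕ) := by exact_mod_cast p.2.two_le
  set x : ℝ := 1 / ((p : ℕ) : ℝ) with hx
  have hx0 : 0 ≤ x := by positivity
  have hx1 : x ≤ 1 / 2 := by
    rw [hx]; exact one_div_le_one_div_of_le (by norm_num) hp2
  have hb := sq_bound D.card x hx0 (by linarith)
  have hb2 := one_add_mul_le_pow (show (-2 : ℝ) ≤ -x by linarith) D.card
  have hpos : 0 < (1 - x) ^ D.card := by apply pow_pos; linarith
  have hlow : (1 / 2 : ℝ) ^ D.card ≤ (1 - x) ^ D.card :=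
    pow_le_pow_left₀ (by norm_num) (by linarith) _
  have e : sf D p - 1 = ((1 - D.card * x) - (1 - x) ^ D.card) / (1 - x) ^ D.card := by
    unfold sf
    rw [hnu, ← hx, show (D.card : ℝ) / ((p : ℕ) : ℝ) = D.card * x by rw [hx]; ring]
    field_simp
  have e2 : 1 / ((p : ℕ) : ℝ) ^ 2 = x ^ 2 := by rw [hx, one_div_pow]
  rw [e, e2, Real.norm_eq_abs, abs_div, abs_of_pos hpos, div_le_iff₀ hpos]
  have h5 : 1 ≤ 2 ^ D.card * (1 - x) ^ D.card := by
    rw [← mul_pow]; apply one_le_pow₀; linarith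
  have h6 : |(1 - D.card * x) - (1 - x) ^ D.card| ≤ (D.card : ℝ) ^ 2 * x ^ 2 := by
    rw [show (1 : ℝ) + -x = 1 - x by ring] at hb2
    rw [abs_le]; constructor
    · linarith
    · have : 0 ≤ (D.card : ℝ) ^ 2 * x ^ 2 := by positivity
      linarith
  calc _ ≤ (D.card : ℝ) ^ 2 * x ^ 2 := h6
    _ ≤ ((D.card : ℝ) ^ 2 * x ^ 2) * (2 ^ D.card * (1 - x) ^ D.card) :=
        le_mul_of_one_le_right (by positivity) h5
    _ = _ := by ring

theorem hasProd_sf (D : Finset ℕ) :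
    HasProd (fun p : Nat.Primes => sf D p) (singSeries D) := by
  have h := Real.multipliable_one_add_of_summable (summable_sf D)
  have h2 : Multipliable (fun p : Nat.Primes => sf D p) := by
    refine h.congr fun p => by ring
  exact h2.hasProd

theorem nu_lt_of_ne_zero (D : Finset ℕ) (h : singSeries D ≠ 0) (p : Nat.Primes) :
    nu D p < p := by
  have hle : nu D p ≤ p := by
    unfold nu
    refine (Finset.card_le_card (t := Finset.range (p : ℕ)) ?_).trans (by simp)
    intro r hr
    obtain ⟨d, _, rfl⟩ := Finset.mem_image.1 hr
    exact Finset.mem_range.2 (Nat.mod_lt _ p.2.pos)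
  refine lt_of_le_of_ne hle fun he => h ?_
  have h0 : sf D p = 0 := by
    unfold sf
    have : ((p : ℕ) : ℝ) ≠ 0 := by exact_mod_cast p.2.ne_zero
    rw [he, div_self this]; simp
  exact (hasProd_sf D).unique (hasProd_zero_of_exists_eq_zero ⟨p, h0⟩)

theorem two_mul_div_le (k ν p : ℝ) (hp : 2 ≤ p) (hν : ν ≤ k) (hk : 0 ≤ k) :
    2 * ν / (p - 1) ≤ (4 * k) * (1 / (p * Real.sqrt p)) * Real.sqrt p := by
  have hs : 0 < Real.sqrt p := Real.sqrt_pos.2 (by linarith)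
  have e : (4 * k) * (1 / (p * Real.sqrt p)) * Real.sqrt p = 4 * k / p := by
    field_simp
  rw [e, div_le_div_iff₀ (by linarith) (by linarith)]
  nlinarith

/-- The uniform finite inequality, for products over a finite set `T` of primes. -/
theorem finite_bound (k : ℕ) (ε : ℝ) (hε : 0 < ε) :
    ∃ C : ℝ, 0 < C ∧ ∀ (h H : ℕ) (D : Finset ℕ) (T : Finset Nat.Primes), D.card = k →
      (∀ d ∈ D, d ≤ h) → 1 ≤ H → H ≤ h → (∀ p : Nat.Primes, nu D p < p) →
      |(∑ d ∈ Finset.Icc 1 H \ D, ∏ p ∈ T, (1 + aa D p d)) - H| ≤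
        C * (h : ℝ) ^ ε * Real.sqrt H := by
  classical
  set δ : ℝ := ε / (k + 1) with hδ
  have hδ0 : 0 < δ := by positivity
  obtain ⟨P, hP⟩ := exists_P δ hδ0
  set Z : ℝ := ∑' p : Nat.Primes, ww (p : ℕ) with hZ
  set K : ℝ := 2 * k * (k + 1) with hK
  refine ⟨2 * Real.exp (4 * k * Z) + k * Real.exp (2 * Z) + Real.exp (K * Z) * 3 ^ P,
    by positivity, ?_⟩
  intro h H D T hD hDh hH hHh hν
  have hH1 : (1 : ℝ) ≤ H := by exact_mod_cast hH
  have hh1 : (1 : ℝ) ≤ h := by exact_mod_cast hH.trans hHh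
  have hsH : 0 < Real.sqrt H := Real.sqrt_pos.2 (by linarith)
  have hsHH : Real.sqrt H * Real.sqrt H = H := Real.mul_self_sqrt (by linarith)
  set E := Finset.Icc 1 H \ D with hE
  -- the two majorants
  set U : Finset Nat.Primes → ℝ := fun s =>
    2 * ∏ p ∈ s, (4 * k * ww (p : ℕ)) + k * ∏ p ∈ s, (2 * ww (p : ℕ)) with hU
  set V : Finset Nat.Primes → ℕ → ℝ := fun s d =>
    ∏ p ∈ s, (Real.sqrt (p : ℕ) * |aa D p d|) with hV
  have hU0 : ∀ s, 0 ≤ U s := by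
    intro s
    have := fun p : Nat.Primes => ww_nonneg (p : ℕ)
    have h1 : 0 ≤ ∏ p ∈ s, (4 * k * ww (p : ℕ)) :=
      Finset.prod_nonneg fun p _ => by have := this p; positivity
    have h2 : 0 ≤ ∏ p ∈ s, (2 * ww (p : ℕ)) :=
      Finset.prod_nonneg fun p _ => by have := this p; positivity
    simp only [hU]; positivity
  have hV0 : ∀ s d, 0 ≤ V s d := fun s d => Finset.prod_nonneg fun p _ => by positivity
  set G : Finset Nat.Primes → ℝ := fun s =>
    (∑ d ∈ E, ∏ p ∈ s, aa D p d) - (if s = ∅ then (H : ℝ) else 0) with hG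
  have hsum : (∑ d ∈ E, ∏ p ∈ T, (1 + aa D p d)) - H = ∑ s ∈ T.powerset, G s := by
    simp only [hG, Finset.sum_sub_distrib, Finset.prod_one_add]
    rw [Finset.sum_comm, Finset.sum_ite_eq' T.powerset ∅]
    simp
  have hGs : ∀ s, |G s| ≤ Real.sqrt H * U s + (1 / Real.sqrt H) * ∑ d ∈ E, V s d := by
    intro s
    have hVE : 0 ≤ (1 / Real.sqrt H) * ∑ d ∈ E, V s d :=
      mul_nonneg (by positivity) (Finset.sum_nonneg fun d _ => hV0 s d)
    have hqs : Real.sqrt ((∏ p ∈ s, (p : ℕ) : ℕ) : ℝ) = ∏ p ∈ s, Real.sqrt (p : ℕ) := by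
      rw [Nat.cast_prod, Real.sqrt_prod _ (fun p _ => Nat.cast_nonneg _)]
    rcases le_or_gt (∏ p ∈ s, (p : ℕ)) H with hq | hq
    · -- small moduli
      have hq' : ∏ p ∈ s, Real.sqrt (p : ℕ) ≤ Real.sqrt H := by
        rw [← hqs]; exact Real.sqrt_le_sqrt (by exact_mod_cast hq)
      have hb : |(∑ d ∈ Finset.Icc 1 H, ∏ p ∈ s, aa D p d) - (if s = ∅ then (H : ℝ) else 0)| ≤
          2 * ∏ p ∈ s, (2 * (nu D p : ℝ) / ((p : ℕ) - 1 : ℝ)) := by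
        rcases Finset.eq_empty_or_nonempty s with rfl | hs
        · simp
        · rw [if_neg hs.ne_empty, sub_zero]
          exact abs_sum_Icc_le D hν s hs H
      have hb1 : ∏ p ∈ s, (2 * (nu D p : ℝ) / ((p : ℕ) - 1 : ℝ)) ≤
          (∏ p ∈ s, (4 * k * ww (p : ℕ))) * Real.sqrt H := by
        refine le_trans ?_ (mul_le_mul_of_nonneg_left hq'
          (Finset.prod_nonneg fun p _ => by have := ww_nonneg (p : ℕ); positivity))
        rw [← Finset.prod_mul_distrib]
        apply Finset.prod_le_prod
        · intro p _
          have hp2 : (2 : ℝ) ≤ (p : ℕ) := by exact_mod_cast p.2.two_le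
          exact div_nonneg (by positivity) (by linarith)
        · intro p _
          have hp2 : (2 : ℝ) ≤ (p : ℕ) := by exact_mod_cast p.2.two_le
          exact two_mul_div_le k (nu D p) (p : ℕ) hp2
            (by have := nu_le_card D p; rw [hD] at this; exact_mod_cast this) (by positivity)
      have hc : ∀ d ∈ D ∩ Finset.Icc 1 H, |∏ p ∈ s, aa D p d| ≤
          (∏ p ∈ s, (2 * ww (p : ℕ))) * Real.sqrt H := by
        intro d hd
        rw [Finset.abs_prod]
        refine le_trans ?_ (mul_le_mul_of_nonneg_left hq'
          (Finset.prod_nonneg fun p _ => by have := ww_nonneg (p : ℕ); positivity))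
        rw [← Finset.prod_mul_distrib]
        apply Finset.prod_le_prod
        · intro p _; positivity
        · intro p _
          have hp2 : (2 : ℝ) ≤ (p : ℕ) := by exact_mod_cast p.2.two_le
          rw [abs_aa D p d p.2 (hν p),
            if_pos (Finset.mem_image_of_mem _ (Finset.mem_inter.1 hd).1)]
          have := two_mul_div_le (1 / 2) (1 / 2) (p : ℕ) hp2 le_rfl (by norm_num)
          norm_num at this ⊢
          unfold ww
          simpa using this
      have hc2 : |∑ d ∈ D ∩ Finset.Icc 1 H, ∏ p ∈ s, aa D p d| ≤
          k * ((∏ p ∈ s, (2 * ww (p : ℕ))) * Real.sqrt H) := by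
        refine (Finset.abs_sum_le_sum_abs _ _).trans ((Finset.sum_le_card_nsmul _ _ _ hc).trans ?_)
        rw [nsmul_eq_mul]
        have hcard : ((D ∩ Finset.Icc 1 H).card : ℝ) ≤ k := by
          rw [← hD]; exact_mod_cast Finset.card_le_card Finset.inter_subset_left
        refine mul_le_mul_of_nonneg_right hcard (mul_nonneg
          (Finset.prod_nonneg fun p _ => by have := ww_nonneg (p : ℕ); positivity) hsH.le)
      have hsplit : ∑ d ∈ E, ∏ p ∈ s, aa D p d = ∑ d ∈ Finset.Icc 1 H, ∏ p ∈ s, aa D p d -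
          ∑ d ∈ D ∩ Finset.Icc 1 H, ∏ p ∈ s, aa D p d := by
        have := Finset.sum_inter_add_sum_sdiff (Finset.Icc 1 H) D (fun d => ∏ p ∈ s, aa D p d)
        rw [Finset.inter_comm] at this
        rw [← this]; ring
      have hGe : G s = ((∑ d ∈ Finset.Icc 1 H, ∏ p ∈ s, aa D p d) -
          (if s = ∅ then (H : ℝ) else 0)) - ∑ d ∈ D ∩ Finset.Icc 1 H, ∏ p ∈ s, aa D p d := by
        simp only [hG]; rw [hsplit]; ring
      rw [hGe]
      have habs := abs_sub ((∑ d ∈ Finset.Icc 1 H, ∏ p ∈ s, aa D p d) -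
          (if s = ∅ then (H : ℝ) else 0)) (∑ d ∈ D ∩ Finset.Icc 1 H, ∏ p ∈ s, aa D p d)
      simp only [hU]
      nlinarith
    · -- large moduli
      have hs : s ≠ ∅ := by
        rintro rfl
        simp at hq
        omega
      have hq' : Real.sqrt H ≤ ∏ p ∈ s, Real.sqrt (p : ℕ) := by
        rw [← hqs]; exact Real.sqrt_le_sqrt (by exact_mod_cast hq.le)
      have h1 : |G s| ≤ (1 / Real.sqrt H) * ∑ d ∈ E, V s d := by
        simp only [hG]
        rw [if_neg hs, sub_zero, Finset.mul_sum]
        refine (Finset.abs_sum_le_sum_abs _ _).trans (Finset.sum_le_sum fun d _ => ?_)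
        simp only [hV]
        rw [Finset.prod_mul_distrib, Finset.abs_prod, ← mul_assoc]
        apply le_mul_of_one_le_left (Finset.prod_nonneg fun p _ => abs_nonneg _)
        rw [one_div, ← div_eq_inv_mul, one_le_div hsH]
        exact hq'
      have := mul_nonneg hsH.le (hU0 s)
      linarith
  have hUsum : ∑ s ∈ T.powerset, U s ≤ 2 * Real.exp (4 * k * Z) + k * Real.exp (2 * Z) := by
    simp only [hU, Finset.sum_add_distrib, ← Finset.mul_sum, ← Finset.prod_one_add]
    have h1 := prod_one_add_ww_le (4 * k) (by positivity) T
    have h2 := prod_one_add_ww_le 2 (by positivity) T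
    gcongr
  have hVsum : ∀ d ∈ E, ∑ s ∈ T.powerset, V s d ≤
      Real.exp (K * Z) * 3 ^ P * (h : ℝ) ^ ε := by
    intro d hd
    obtain ⟨hd1, hdD⟩ := Finset.mem_sdiff.1 hd
    have hdh : d ≤ h := (Finset.mem_Icc.1 hd1).2.trans hHh
    simp only [hV]
    rw [← Finset.prod_one_add]
    set n : ℕ := ∏ e ∈ D, ((d : ℤ) - e).natAbs with hn
    have hn0 : 0 < n := by
      apply Finset.prod_pos
      intro e he
      rw [Int.natAbs_pos]
      intro h0
      have : d = e := by omega
      exact hdD (this ▸ he)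
    have hnh : n ≤ h ^ k := by
      rw [← hD]
      apply Finset.prod_le_pow_card
      intro e he
      have := hDh e he
      omega
    have hstep : ∏ p ∈ T, (1 + Real.sqrt (p : ℕ) * |aa D p d|) ≤
        (∏ p ∈ T, (1 + K * ww (p : ℕ))) * ∏ p ∈ T, (if (p : ℕ) ∣ n then (3 : ℝ) else 1) := by
      rw [← Finset.prod_mul_distrib]
      apply Finset.prod_le_prod
      · intro p _; positivity
      · intro p _
        have := sqrt_mul_abs_aa_le D p d (hν p) n ?_
        · rw [hD] at this; exact this
        · intro e he hmod
          refine Dvd.dvd.trans ?_ (Finset.dvd_prod_of_mem _ he)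
          have : ((p : ℕ) : ℤ) ∣ (d : ℤ) - e := by
            have h1 : (e : ℕ) ≡ d [MOD (p : ℕ)] := hmod.symm
            exact (Nat.modEq_iff_dvd).1 h1
          exact Int.natCast_dvd.1 this
    refine hstep.trans ?_
    rw [mul_assoc]
    apply mul_le_mul (prod_one_add_ww_le K (by positivity) T) _
      (Finset.prod_nonneg fun p _ => by split_ifs <;> norm_num) (Real.exp_pos _).le
    refine (prod_ite_three_le n hn0 δ hδ0 P hP T).trans ?_
    apply mul_le_mul_of_nonneg_left _ (by positivity)
    calc (n : ℝ) ^ δ ≤ ((h : ℝ) ^ k) ^ δ :=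
          Real.rpow_le_rpow (by positivity) (by exact_mod_cast hnh) hδ0.le
      _ = (h : ℝ) ^ (k * δ) := by
          rw [← Real.rpow_natCast, ← Real.rpow_mul (by linarith)]
      _ ≤ (h : ℝ) ^ ε := by
          apply Real.rpow_le_rpow_of_exponent_le hh1
          rw [hδ, mul_div_assoc', div_le_iff₀ (by positivity)]
          nlinarith
  have hcardE : (E.card : ℝ) ≤ H := by
    have : E.card ≤ (Finset.Icc 1 H).card := Finset.card_le_card Finset.sdiff_subset
    rw [Nat.card_Icc] at this
    exact_mod_cast this
  have hhε : 1 ≤ (h : ℝ) ^ ε := Real.one_le_rpow hh1 hε.le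
  set M : ℝ := Real.exp (K * Z) * 3 ^ P * (h : ℝ) ^ ε with hM
  have hM0 : 0 ≤ M := by positivity
  have hVE : ∑ d ∈ E, ∑ s ∈ T.powerset, V s d ≤ H * M := by
    refine (Finset.sum_le_card_nsmul _ _ _ hVsum).trans ?_
    rw [nsmul_eq_mul]
    exact mul_le_mul_of_nonneg_right hcardE hM0
  rw [hsum]
  calc |∑ s ∈ T.powerset, G s| ≤ ∑ s ∈ T.powerset, |G s| := Finset.abs_sum_le_sum_abs _ _
    _ ≤ ∑ s ∈ T.powerset, (Real.sqrt H * U s + (1 / Real.sqrt H) * ∑ d ∈ E, V s d) :=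
        Finset.sum_le_sum fun s _ => hGs s
    _ = Real.sqrt H * ∑ s ∈ T.powerset, U s +
          (1 / Real.sqrt H) * ∑ d ∈ E, ∑ s ∈ T.powerset, V s d := by
        rw [Finset.sum_add_distrib, ← Finset.mul_sum, ← Finset.mul_sum, Finset.sum_comm]
    _ ≤ Real.sqrt H * (2 * Real.exp (4 * k * Z) + k * Real.exp (2 * Z)) +
          (1 / Real.sqrt H) * (H * M) := by gcongr
    _ = Real.sqrt H * (2 * Real.exp (4 * k * Z) + k * Real.exp (2 * Z)) * 1 +
          Real.sqrt H * M := by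
        have : (1 / Real.sqrt H) * (H * M) = Real.sqrt H * M := by
          rw [← mul_assoc, one_div, ← div_eq_inv_mul, Real.div_sqrt]
        rw [this, mul_one]
    _ ≤ Real.sqrt H * (2 * Real.exp (4 * k * Z) + k * Real.exp (2 * Z)) * (h : ℝ) ^ ε +
          Real.sqrt H * M := by gcongr
    _ = _ := by rw [hM]; ring

/-- the singular series average `∑_{1≤d_0≤H, d_0∉D_k} S(D_k∪{d_0})
 = S(D_k)·H·(1 + O_k(h^ε/H^{1/2}))`. -/
theorem stmt12 (k : ℕ) (ε : ℝ) (hε : 0 < ε) :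
    ∃ C : ℝ, 0 < C ∧ ∀ (h H : ℕ) (D : Finset ℕ), D.card = k →
      (∀ d ∈ D, d ≤ h) → 1 ≤ H → H ≤ h → singSeries D ≠ 0 →
      |(∑ d0 ∈ Finset.Icc 1 H \ D, singSeries (insert d0 D)) - singSeries D * H| ≤
        C * |singSeries D| * (h : ℝ) ^ ε * (H : ℝ) / Real.sqrt H := by
  obtain ⟨C, hC, hb⟩ := finite_bound k ε hε
  refine ⟨C, hC, ?_⟩
  intro h H D hD hDh hH hHh hS
  have hν := nu_lt_of_ne_zero D hS
  have e : C * |singSeries D| * (h : ℝ) ^ ε * (H : ℝ) / Real.sqrt H =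
      |singSeries D| * (C * (h : ℝ) ^ ε * Real.sqrt H) := by
    rw [mul_div_assoc, Real.div_sqrt]; ring
  rw [e]
  have hlimD : Filter.Tendsto (fun T : Finset Nat.Primes => ∏ p ∈ T, sf D p) Filter.atTop
      (nhds (singSeries D)) := hasProd_sf D
  have hlim : ∀ d, Filter.Tendsto (fun T : Finset Nat.Primes => ∏ p ∈ T, sf (insert d D) p)
      Filter.atTop (nhds (singSeries (insert d D))) := fun d => hasProd_sf (insert d D)
  refine le_of_tendsto_of_tendsto
    ((tendsto_finsetSum _ fun d _ => hlim d).sub (hlimD.mul_const (H : ℝ))).abs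
    (hlimD.abs.mul_const (C * (h : ℝ) ^ ε * Real.sqrt H)) (Filter.Eventually.of_forall ?_)
  intro T
  have h1 : ∑ d ∈ Finset.Icc 1 H \ D, ∏ p ∈ T, sf (insert d D) p - (∏ p ∈ T, sf D p) * H =
      (∏ p ∈ T, sf D p) * ((∑ d ∈ Finset.Icc 1 H \ D, ∏ p ∈ T, (1 + aa D p d)) - H) := by
    rw [mul_sub, Finset.mul_sum]
    congr 1
    apply Finset.sum_congr rfl
    intro d hd
    rw [← Finset.prod_mul_distrib]
    exact Finset.prod_congr rfl fun p _ =>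
      sf_insert D p d p.2 (Finset.mem_sdiff.1 hd).2 (hν p)
  show |∑ d ∈ Finset.Icc 1 H \ D, ∏ p ∈ T, sf (insert d D) p - (∏ p ∈ T, sf D p) * H| ≤ _
  rw [h1, abs_mul]
  exact mul_le_mul_of_nonneg_left (hb h H D T hD hDh hH hHh hν) (abs_nonneg _)
end
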